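/- arXiv:1902.10232 — 2 statements merged into one kernel-verified Lean document; each statement's English description precedes it below -/
import Mathlib

section
/- For all nonnegative integers α, β and n, the Rodrigues expression P_n^{α,β}(x) = ((-1)^n/(2^n n!)) (1-x)^{-α} (1+x)^{-β} (d^n/dx^n)[(1-x)^{n+α}(1+x)^{n+β}] agrees on the open interval (-1,1) with a polynomial of degree exactly n; i.e. there exists a real polynomial p with deg p = n such that p(x) equals this expression for every x ∈ (-1,1). -/
open Polynomial in
/-- The iterated analytic derivative of a polynomial function is given by the iterated formal
derivative. -/
theorem Polynomial.iteratedDeriv_eval (p : ℝ[X]) (n : ℕ) :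
    iteratedDeriv n (fun x => p.eval x) = fun x => (derivative^[n] p).eval x := by
  induction n with
  | zero => simp
  | succ n ih =>
    rw [iteratedDeriv_succ, ih, Function.iterate_succ_apply']
    ext x
    exact Polynomial.deriv _

open Polynomial in
/-- In characteristic zero each derivative lowers the degree by exactly one. -/
theorem Polynomial.degree_iterate_derivative_of_natDegree_eq_add {p : ℝ[X]} {n m : ℕ}
    (hp0 : p ≠ 0) (hp : p.natDegree = m + n) : (derivative^[n] p).degree = m := by
  refine degree_eq_of_le_of_coeff_ne_zero ?_ ?_
  · refine degree_le_of_natDegree_le ((natDegree_iterate_derivative p n).trans ?_)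
    omega
  · rw [coeff_iterate_derivative, ← hp, coeff_natDegree, nsmul_eq_mul]
    refine mul_ne_zero ?_ (leadingCoeff_ne_zero.mpr hp0)
    exact_mod_cast (Nat.descFactorial_pos.mpr (by omega)).ne'

open Polynomial in
/-- The `n`-th derivative of `(1 - X) ^ (n + a) * (1 + X) ^ (n + b)` is
`(1 - X) ^ a * (1 + X) ^ b` times a polynomial of degree `n`. -/
theorem exists_iterate_derivative_jacobi_weight_eq (a b n : ℕ) :
    ∃ q : ℝ[X], q.degree = n ∧
      derivative^[n] ((1 - X : ℝ[X]) ^ (n + a) * (1 + X) ^ (n + b)) =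
        (1 - X) ^ a * (1 + X) ^ b * q := by
  have hsub : (1 - X : ℝ[X]).degree = 1 := by
    rw [← neg_sub, degree_neg, ← C_1, degree_X_sub_C]
  have hadd : (1 + X : ℝ[X]).degree = 1 := by
    rw [add_comm, ← C_1, degree_X_add_C]
  have hdeg (k l : ℕ) : ((1 - X : ℝ[X]) ^ k * (1 + X) ^ l).degree = ((k + l : ℕ) : WithBot ℕ) := by
    rw [degree_mul, degree_pow, degree_pow, hsub, hadd]
    simp
  have hcop : IsCoprime (1 - X : ℝ[X]) (1 + X) := by
    refine ⟨C (1 / 2), C (1 / 2), ?_⟩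
    rw [← mul_add, sub_add_add_cancel, ← C_1, ← C_add, ← C_mul]
    norm_num
  have hderiv : (derivative^[n] ((1 - X : ℝ[X]) ^ (n + a) * (1 + X) ^ (n + b))).degree =
      ((a + b + n : ℕ) : WithBot ℕ) := by
    refine degree_iterate_derivative_of_natDegree_eq_add ?_ ?_
    · exact mul_ne_zero (pow_ne_zero _ (ne_zero_of_degree_gt (n := 0) (by simp [hsub])))
        (pow_ne_zero _ (ne_zero_of_degree_gt (n := 0) (by simp [hadd])))
    · rw [natDegree_eq_of_degree_eq_some (hdeg _ _)]
      omega
  have hleft := pow_sub_dvd_iterate_derivative_of_pow_dvd n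
    (dvd_mul_right ((1 - X : ℝ[X]) ^ (n + a)) ((1 + X) ^ (n + b)))
  have hright := pow_sub_dvd_iterate_derivative_of_pow_dvd n
    (dvd_mul_left ((1 + X : ℝ[X]) ^ (n + b)) ((1 - X) ^ (n + a)))
  rw [Nat.add_sub_cancel_left] at hleft hright
  obtain ⟨q, hq⟩ := hcop.pow.mul_dvd hleft hright
  refine ⟨q, ?_, hq⟩
  rw [hq, degree_mul, hdeg, Nat.cast_add (a + b) n] at hderiv
  exact (WithBot.add_left_inj (WithBot.natCast_ne_bot _)).mp hderiv

/-- The Rodrigues expression for the Jacobi polynomial `P_n^{a,b}` agrees on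
`(-1, 1)` with a real polynomial of degree exactly `n`. -/
theorem jacobi_rodrigues_is_polynomial (a b n : ℕ) :
    ∃ p : Polynomial ℝ, p.degree = n ∧ ∀ x ∈ Set.Ioo (-1 : ℝ) 1,
      p.eval x = ((-1 : ℝ) ^ n / (2 ^ n * n.factorial)) * (1 - x) ^ (-(a : ℤ)) *
        (1 + x) ^ (-(b : ℤ)) *
        iteratedDeriv n (fun y : ℝ => (1 - y) ^ (n + a) * (1 + y) ^ (n + b)) x := by
  obtain ⟨q, hdeg, hq⟩ := exists_iterate_derivative_jacobi_weight_eq a b n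
  refine ⟨Polynomial.C ((-1 : ℝ) ^ n / (2 ^ n * n.factorial)) * q, ?_, fun x hx => ?_⟩
  · rw [Polynomial.degree_C_mul (by positivity), hdeg]
  · have hsub : 1 - x ≠ 0 := by linarith [hx.2]
    have hadd : 1 + x ≠ 0 := by linarith [hx.1]
    have hderiv := congrFun (Polynomial.iteratedDeriv_eval
      ((1 - Polynomial.X) ^ (n + a) * (1 + Polynomial.X) ^ (n + b)) n) x
    rw [hq] at hderiv
    simp only [Polynomial.eval_mul, Polynomial.eval_pow, Polynomial.eval_sub, Polynomial.eval_add,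
      Polynomial.eval_one, Polynomial.eval_X] at hderiv
    rw [hderiv, Polynomial.eval_mul, Polynomial.eval_C, zpow_neg, zpow_neg, zpow_natCast,
      zpow_natCast]
    field_simp
end

section
/- For all nonnegative integers α, β and all distinct nonnegative integers n ≠ m, the Jacobi polynomials are orthogonal with respect to the weight (1-x)^α (1+x)^β on [-1,1]: ∫_{-1}^{1} (1-x)^α (1+x)^β P_n^{α,β}(x) P_m^{α,β}(x) dx = 0. -/
/-- The Jacobi polynomial `P_n^{a,b}` (nonnegative integer parameters `a`, `b`), defined
through the Rodrigues formula. -/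
noncomputable def jacobiP (n a b : ℕ) (x : ℝ) : ℝ :=
  ((-1 : ℝ) ^ n / (2 ^ n * n.factorial)) * (1 - x) ^ (-(a : ℤ)) * (1 + x) ^ (-(b : ℤ)) *
    iteratedDeriv n (fun y : ℝ => (1 - y) ^ (n + a) * (1 + y) ^ (n + b)) x

open Polynomial in
/-- Repeated integration by parts: the `n`-th derivative of a polynomial vanishing to order `n` at
both endpoints of `[-1, 1]` is orthogonal to every polynomial of degree less than `n`. -/
theorem integral_iterate_derivative_mul_eq_zero (n : ℕ) (u p : ℝ[X]) (h₁ : (1 - X) ^ n ∣ u)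
    (h₂ : (1 + X) ^ n ∣ u) (hp : derivative^[n] p = 0) :
    ∫ x in (-1 : ℝ)..1, (derivative^[n] u).eval x * p.eval x = 0 := by
  induction n generalizing p with
  | zero =>
    have hp' : p = 0 := hp
    simp [hp']
  | succ n ih =>
    have hparts := intervalIntegral.integral_deriv_mul_eq_sub (a := -1) (b := 1)
      (fun x _ => (derivative^[n] u).hasDerivAt x) (fun x _ => p.hasDerivAt x)
      ((Polynomial.continuous _).intervalIntegrable _ _)
      ((Polynomial.continuous _).intervalIntegrable _ _)
    have e₁ : (derivative^[n] u).eval 1 = 0 := by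
      have hd := pow_sub_dvd_iterate_derivative_of_pow_dvd n h₁
      rw [Nat.add_sub_cancel_left, pow_one] at hd
      exact eval_eq_zero_of_dvd_of_eval_eq_zero hd (by simp)
    have e₂ : (derivative^[n] u).eval (-1) = 0 := by
      have hd := pow_sub_dvd_iterate_derivative_of_pow_dvd n h₂
      rw [Nat.add_sub_cancel_left, pow_one] at hd
      exact eval_eq_zero_of_dvd_of_eval_eq_zero hd (by simp)
    have hrec := ih (derivative p) ((pow_dvd_pow _ n.le_succ).trans h₁)
      ((pow_dvd_pow _ n.le_succ).trans h₂) hp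
    rw [intervalIntegral.integral_add
      (Continuous.intervalIntegrable (by fun_prop) _ _)
      (Continuous.intervalIntegrable (by fun_prop) _ _), hrec, e₁, e₂] at hparts
    simpa [Function.iterate_succ_apply'] using hparts

open Polynomial in
/-- The `n`-th derivative in the Rodrigues formula is `(1 - X) ^ a * (1 + X) ^ b` times a polynomial
of degree at most `n`. -/
theorem exists_iterate_derivative_rodrigues (n a b : ℕ) :
    ∃ q : ℝ[X], q.natDegree ≤ n ∧
      derivative^[n] ((1 - X : ℝ[X]) ^ (n + a) * (1 + X) ^ (n + b)) =
        (1 - X) ^ a * (1 + X) ^ b * q := by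
  have natDegree_one_sub : (1 - X : ℝ[X]).natDegree = 1 := by compute_degree!
  have natDegree_one_add : (1 + X : ℝ[X]).natDegree = 1 := by compute_degree!
  have ne_one_sub : (1 - X : ℝ[X]) ≠ 0 := by
    intro h
    simp [h] at natDegree_one_sub
  have ne_one_add : (1 + X : ℝ[X]) ≠ 0 := by
    intro h
    simp [h] at natDegree_one_add
  set u : ℝ[X] := (1 - X) ^ (n + a) * (1 + X) ^ (n + b) with hu
  have hcop : IsCoprime (1 - X : ℝ[X]) (1 + X) :=
    ⟨C (1 / 2), C (1 / 2), by
      rw [← mul_add, sub_add_add_cancel, ← C_1, ← C_add, ← C_mul]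
      norm_num⟩
  have h₁ : (1 - X) ^ a ∣ derivative^[n] u := by
    simpa using pow_sub_dvd_iterate_derivative_of_pow_dvd n (Dvd.intro _ hu.symm)
  have h₂ : (1 + X) ^ b ∣ derivative^[n] u := by
    simpa using pow_sub_dvd_iterate_derivative_of_pow_dvd n (Dvd.intro_left _ hu.symm)
  obtain ⟨q, hq⟩ := hcop.pow.mul_dvd h₁ h₂
  refine ⟨q, ?_, hq⟩
  rcases eq_or_ne q 0 with rfl | hq0
  · simp
  have hdeg := natDegree_iterate_derivative u n
  rw [hq, natDegree_mul (by positivity) hq0, natDegree_mul (by positivity) (by positivity), hu,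
    natDegree_mul (by positivity) (by positivity)] at hdeg
  simp only [natDegree_pow, natDegree_one_sub, natDegree_one_add] at hdeg
  omega

open Polynomial in
/-- Iterated derivatives of a polynomial function are given by iterated formal derivatives. -/
theorem iteratedDeriv_eval_eq (n : ℕ) (p : ℝ[X]) :
    iteratedDeriv n (fun x => p.eval x) = fun x => (derivative^[n] p).eval x := by
  induction n with
  | zero => simp
  | succ n ih =>
    rw [iteratedDeriv_succ, ih]
    ext x
    rw [Polynomial.deriv, Function.iterate_succ_apply']

open Polynomial in
/-- On the open interval, the Jacobi polynomial multiplied by its weight is, up to a constant, the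
polynomial derivative in the Rodrigues formula. -/
theorem weight_mul_jacobiP (n a b : ℕ) {x : ℝ} (hx : x ∈ Set.Ioo (-1 : ℝ) 1) :
    (1 - x) ^ a * (1 + x) ^ b * jacobiP n a b x =
      (-1 : ℝ) ^ n / (2 ^ n * n.factorial) *
        (derivative^[n] ((1 - X : ℝ[X]) ^ (n + a) * (1 + X) ^ (n + b))).eval x := by
  have h₁ : 1 - x ≠ 0 := by linarith [hx.2]
  have h₂ : 1 + x ≠ 0 := by linarith [hx.1]
  have hD := congrFun
    (iteratedDeriv_eval_eq n ((1 - X : ℝ[X]) ^ (n + a) * (1 + X) ^ (n + b))) x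
  simp only [eval_mul, eval_pow, eval_sub, eval_add, eval_one, eval_X] at hD
  rw [jacobiP, hD, zpow_neg, zpow_neg, zpow_natCast, zpow_natCast]
  field_simp

/-- Orthogonality of the Jacobi polynomials with respect to the weight
`(1-x)^a (1+x)^b` on `[-1, 1]`. -/
theorem jacobi_orthogonal (a b n m : ℕ) (hnm : n ≠ m) :
    ∫ x in (-1 : ℝ)..1, (1 - x) ^ a * (1 + x) ^ b * jacobiP n a b x * jacobiP m a b x = 0 := by
  wlog h : m < n generalizing n m
  · rw [← this m n hnm.symm (by omega)]
    simp only [mul_right_comm]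
  obtain ⟨q, hqdeg, hq⟩ := exists_iterate_derivative_rodrigues m a b
  have horth := integral_iterate_derivative_mul_eq_zero n
    ((1 - Polynomial.X) ^ (n + a) * (1 + Polynomial.X) ^ (n + b)) q
    ((pow_dvd_pow _ (n.le_add_right a)).mul_right _)
    ((pow_dvd_pow _ (n.le_add_right b)).mul_left _)
    (Polynomial.iterate_derivative_eq_zero (hqdeg.trans_lt h))
  have hcongr : ∀ x ∈ Set.Ioo (-1 : ℝ) 1,
      (1 - x) ^ a * (1 + x) ^ b * jacobiP n a b x * jacobiP m a b x =
        (-1 : ℝ) ^ n / (2 ^ n * n.factorial) * ((-1 : ℝ) ^ m / (2 ^ m * m.factorial)) *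
          ((Polynomial.derivative^[n]
            ((1 - Polynomial.X) ^ (n + a) * (1 + Polynomial.X) ^ (n + b))).eval x * q.eval x) := by
    intro x hx
    have hw : (1 - x) ^ a * (1 + x) ^ b ≠ 0 :=
      mul_ne_zero (pow_ne_zero _ (by linarith [hx.2])) (pow_ne_zero _ (by linarith [hx.1]))
    have hm : jacobiP m a b x = (-1 : ℝ) ^ m / (2 ^ m * m.factorial) * q.eval x := by
      refine mul_left_cancel₀ hw ?_
      rw [weight_mul_jacobiP m a b hx, hq]
      simp only [Polynomial.eval_mul, Polynomial.eval_pow, Polynomial.eval_sub,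
        Polynomial.eval_add, Polynomial.eval_one, Polynomial.eval_X]
      ring
    rw [weight_mul_jacobiP n a b hx, hm]
    ring
  rw [intervalIntegral.integral_congr_Ioo_of_le (by norm_num) hcongr,
    intervalIntegral.integral_const_mul, horth, mul_zero]
end
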